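/- With Ω and u as above and p ∈ (3, k+2): u cannot be approximated in the W^{1,p}(Ω) norm by functions that are restrictions to Ω of C^∞ functions on a neighborhood of the closure of Ω. Equivalently, C^∞(cl Ω) is not dense in W^{1,p}(Ω). -/

import Mathlib

open Set MeasureTheory

def memVz (k : ℕ) (x y z : ℝ) : Prop :=
  ((x + 2*z)^2 + y^2 < z^2) ∨ (-2*z < x ∧ x < 2*z ∧ 0 < y ∧ y < z^k) ∨
    ((x - 2*z)^2 + y^2 < z^2)

/-- The domain `Ω ⊂ ℝ³`. -/
def Omg (k : ℕ) : Set (EuclideanSpace ℝ (Fin 3)) :=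
  {q | 0 < q 2 ∧ q 2 < 1 ∧ memVz k (q 0) (q 1) (q 2)}

/-- `g` approximates `u` within `ε` in the `W^{1,p}(Ω)` norm: both the function and
its gradient are `ε`-close in `L^p(Ω)`. -/
noncomputable def W1pClose (u g : EuclideanSpace ℝ (Fin 3) → ℝ) (Ω : Set (EuclideanSpace ℝ (Fin 3)))
    (p : ℝ) (ε : ℝ) : Prop :=
  eLpNorm (Ω.indicator (fun q => u q - g q)) (ENNReal.ofReal p) volume < ENNReal.ofReal ε ∧
  eLpNorm (Ω.indicator (fun q => ‖fderiv ℝ u q - fderiv ℝ g q‖)) (ENNReal.ofReal p) volume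
    < ENNReal.ofReal ε

abbrev E3 := EuclideanSpace ℝ (Fin 3)

lemma ftc_bound (U : Set E3) (g : E3 → ℝ) (hU : IsOpen U) (hg : ContDiffOn ℝ (⊤ : ℕ∞) g U)
    (q : E3) (hq : ∀ t ∈ Icc (0:ℝ) 1, t • q ∈ U) :
    ‖g q - g 0‖ₑ ≤ ∫⁻ t in Ioc (0:ℝ) 1, ‖fderiv ℝ g (t • q)‖ₑ * ‖q‖ₑ := by
  have hcont : ContinuousOn (fderiv ℝ g) U :=
    hg.continuousOn_fderiv_of_isOpen hU (by exact_mod_cast le_top)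
  have hder : ∀ t ∈ uIcc (0:ℝ) 1,
      HasDerivAt (fun s : ℝ => g (s • q)) (fderiv ℝ g (t • q) q) t := by
    intro t ht
    rw [uIcc_of_le zero_le_one] at ht
    have h1 : HasFDerivAt g (fderiv ℝ g (t • q)) (t • q) := by
      apply DifferentiableAt.hasFDerivAt
      exact (hg.differentiableOn (by simp)).differentiableAt (hU.mem_nhds (hq t ht))
    have h2 : HasDerivAt (fun s : ℝ => s • q) q t := by
      simpa using (hasDerivAt_id t).smul_const q
    exact h1.comp_hasDerivAt t h2
  have hint : IntervalIntegrable (fun t : ℝ => fderiv ℝ g (t • q) q) volume 0 1 := by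
    apply ContinuousOn.intervalIntegrable
    rw [uIcc_of_le zero_le_one]
    have : ContinuousOn (fun t : ℝ => fderiv ℝ g (t • q)) (Icc 0 1) :=
      hcont.comp (by fun_prop) hq
    exact this.clm_apply continuousOn_const
  have h := intervalIntegral.integral_eq_sub_of_hasDerivAt hder hint
  simp only [one_smul, zero_smul] at h
  rw [← h, intervalIntegral.integral_of_le zero_le_one]
  refine (enorm_integral_le_lintegral_enorm _).trans ?_
  apply lintegral_mono
  intro t
  exact ContinuousLinearMap.le_opENorm _ _

lemma scale_bound (C : Set E3) (hC : MeasurableSet C)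
    (hstar : ∀ q ∈ C, ∀ t ∈ Ioc (0:ℝ) 1, t • q ∈ C) (p : ℝ) (hp : 3 < p)
    (f : E3 → ℝ) (hf : Measurable f) (t : ℝ) (ht : t ∈ Ioc (0:ℝ) 1) :
    ∫⁻ q in C, ‖f (t • q)‖ₑ ≤ ENNReal.ofReal (t ^ (-3 / p)) *
      eLpNorm (C.indicator f) (ENNReal.ofReal p) volume * volume C ^ (1 - 1 / p) := by
  have hp0 : 0 < p := by linarith
  have h1 : eLpNorm (fun q => f (t • q)) 1 (volume.restrict C) ≤ _ :=
    eLpNorm_le_eLpNorm_mul_rpow_measure_univ (q := ENNReal.ofReal p)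
      (by rw [← ENNReal.ofReal_one]; exact ENNReal.ofReal_le_ofReal (by linarith))
      (by
        have : Measurable (fun q : E3 => f (t • q)) := hf.comp (measurable_const_smul t)
        exact this.aestronglyMeasurable)
  rw [eLpNorm_one_eq_lintegral_enorm] at h1
  refine h1.trans ?_
  rw [ENNReal.toReal_ofReal hp0.le, Measure.restrict_apply_univ]
  simp only [ENNReal.toReal_one, div_one]
  gcongr
  rw [← eLpNorm_indicator_eq_eLpNorm_restrict hC]
  have h2 : eLpNorm (C.indicator fun q => f (t • q)) (ENNReal.ofReal p) volume ≤
      eLpNorm ((C.indicator f) ∘ (fun q : E3 => t • q)) (ENNReal.ofReal p) volume := by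
    apply eLpNorm_mono_enorm
    intro q
    by_cases hq : q ∈ C
    · simp [hq, hstar q hq t ht]
    · simp [hq]
  refine h2.trans ?_
  rw [← eLpNorm_map_measure (hf.indicator hC).aestronglyMeasurable
    (measurable_const_smul t).aemeasurable, Measure.map_addHaar_smul _ ht.1.ne']
  have ht3 : 0 < (t ^ 3)⁻¹ := by have := ht.1; positivity
  have hfr : Module.finrank ℝ E3 = 3 := by simp
  rw [hfr, abs_of_pos ht3, eLpNorm_smul_measure_of_ne_zero (ENNReal.ofReal_pos.2 ht3).ne']
  rw [smul_eq_mul]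
  gcongr
  rw [one_div, ENNReal.toReal_inv, ENNReal.toReal_ofReal hp0.le,
    ENNReal.ofReal_rpow_of_pos ht3]
  apply ENNReal.ofReal_le_ofReal
  apply le_of_eq
  rw [← Real.rpow_natCast, ← Real.rpow_neg ht.1.le, ← Real.rpow_mul ht.1.le]
  congr 1

lemma morrey (C : Set E3) (hC : IsOpen C) (hne : C.Nonempty) (R : ℝ)
    (hR : ∀ q ∈ C, ‖q‖ ≤ R)
    (hstar : ∀ q ∈ C, ∀ t ∈ Ioc (0:ℝ) 1, t • q ∈ C) (p : ℝ) (hp : 3 < p) :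
    ∃ K : ℝ, 0 < K ∧ ∀ (U : Set E3) (g : E3 → ℝ) (c ε : ℝ), 0 < ε → IsOpen U → C ⊆ U → 0 ∈ U →
      ContDiffOn ℝ (⊤ : ℕ∞) g U →
      eLpNorm (C.indicator (fun q => c - g q)) (ENNReal.ofReal p) volume ≤ ENNReal.ofReal ε →
      eLpNorm (C.indicator (fun q => ‖fderiv ℝ g q‖)) (ENNReal.ofReal p) volume
        ≤ ENNReal.ofReal ε → |c - g 0| ≤ K * ε := by
  have hp0 : 0 < p := by linarith
  set V := volume C with hV
  have hV0 : V ≠ 0 := (hC.measure_pos volume hne).ne'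
  have hVt : V ≠ ⊤ := by
    have : C ⊆ Metric.closedBall 0 R := fun q hq => by simpa using hR q hq
    exact ((measure_mono this).trans_lt measure_closedBall_lt_top).ne
  set A : ENNReal := ∫⁻ t in Ioc (0:ℝ) 1, ENNReal.ofReal (t ^ (-3 / p)) with hA
  have hAt : A ≠ ⊤ := by
    have h : IntervalIntegrable (fun x : ℝ => x ^ (-3 / p)) volume 0 1 :=
      intervalIntegral.intervalIntegrable_rpow' (by rw [lt_div_iff₀ hp0]; linarith)
    rw [intervalIntegrable_iff_integrableOn_Ioc_of_le zero_le_one] at h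
    exact h.lintegral_lt_top.ne
  set M : ENNReal := V⁻¹ * (V ^ (1 - 1 / p) * (1 + A * ENNReal.ofReal R)) with hM
  have hVp : V ^ (1 - 1 / p) ≠ ⊤ := by
    apply ENNReal.rpow_ne_top_of_nonneg _ hVt
    rw [sub_nonneg, div_le_one hp0]; linarith
  have hMt : M ≠ ⊤ := by
    refine ENNReal.mul_ne_top (by simpa using hV0) (ENNReal.mul_ne_top hVp ?_)
    exact ENNReal.add_ne_top.2 ⟨by simp, ENNReal.mul_ne_top hAt (by simp)⟩
  refine ⟨M.toReal + 1, by positivity, ?_⟩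
  intro U g c ε hε hU hCU h0U hg h1 h2
  have hCm := hC.measurableSet
  have hfm : Measurable (fun q : E3 => ‖fderiv ℝ g q‖) := (measurable_fderiv ℝ g).norm
  -- pointwise bound
  have hpt : ∀ q ∈ C, ‖c - g 0‖ₑ ≤ ‖c - g q‖ₑ +
      ∫⁻ t in Ioc (0:ℝ) 1, ‖fderiv ℝ g (t • q)‖ₑ * ENNReal.ofReal R := by
    intro q hq
    have hb := ftc_bound U g hU hg q (by
      intro t ht
      rcases ht.1.eq_or_lt with h | h
      · simpa [← h] using h0U
      · exact hCU (hstar q hq t ⟨h, ht.2⟩))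
    have e : c - g 0 = (c - g q) + (g q - g 0) := by ring
    rw [e]
    refine (enorm_add_le _ _).trans ?_
    gcongr
    refine hb.trans ?_
    gcongr with t
    rw [← ofReal_norm]
    exact ENNReal.ofReal_le_ofReal (hR q hq)
  have hmeas1 : AEMeasurable (fun q => ‖c - g q‖ₑ) (volume.restrict C) := by
    have : ContinuousOn (fun q => c - g q) C := continuousOn_const.sub (hg.continuousOn.mono hCU)
    exact (this.aestronglyMeasurable hCm).enorm
  have hI : ‖c - g 0‖ₑ * V ≤ (∫⁻ q in C, ‖c - g q‖ₑ) +
      ∫⁻ q in C, ∫⁻ t in Ioc (0:ℝ) 1, ‖fderiv ℝ g (t • q)‖ₑ * ENNReal.ofReal R := by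
    rw [← setLIntegral_const, ← lintegral_add_left' hmeas1]
    exact setLIntegral_mono' hCm hpt
  have hT1 : ∫⁻ q in C, ‖c - g q‖ₑ ≤ ENNReal.ofReal ε * V ^ (1 - 1 / p) := by
    have h3 := eLpNorm_le_eLpNorm_mul_rpow_measure_univ (μ := volume.restrict C)
      (f := fun q => c - g q) (p := 1) (q := ENNReal.ofReal p)
      (by rw [← ENNReal.ofReal_one]; exact ENNReal.ofReal_le_ofReal (by linarith))
      ((continuousOn_const.sub (hg.continuousOn.mono hCU)).aestronglyMeasurable hCm)
    rw [eLpNorm_one_eq_lintegral_enorm, ENNReal.toReal_ofReal hp0.le,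
      Measure.restrict_apply_univ, ← eLpNorm_indicator_eq_eLpNorm_restrict hCm] at h3
    simp only [ENNReal.toReal_one, div_one] at h3
    exact h3.trans (by gcongr)
  have hT2 : ∫⁻ q in C, ∫⁻ t in Ioc (0:ℝ) 1, ‖fderiv ℝ g (t • q)‖ₑ * ENNReal.ofReal R ≤
      ENNReal.ofReal ε * V ^ (1 - 1 / p) * (A * ENNReal.ofReal R) := by
    have hmu : Measurable (fun x : E3 × ℝ => ‖fderiv ℝ g (x.2 • x.1)‖ₑ * ENNReal.ofReal R) := by
      have h4 : Measurable (fun x : E3 × ℝ => x.2 • x.1) := measurable_snd.smul measurable_fst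
      exact ((measurable_fderiv ℝ g).comp h4).enorm.mul_const _
    rw [lintegral_lintegral_swap hmu.aemeasurable]
    calc _ ≤ ∫⁻ t in Ioc (0:ℝ) 1, ENNReal.ofReal (t ^ (-3 / p)) *
            (ENNReal.ofReal ε * V ^ (1 - 1 / p) * ENNReal.ofReal R) := by
          apply setLIntegral_mono' measurableSet_Ioc
          intro t ht
          have h5 := scale_bound C hCm hstar p hp _ hfm t ht
          simp only [enorm_norm] at h5
          rw [lintegral_mul_const' _ _ (by simp)]
          calc _ ≤ _ * ENNReal.ofReal R := mul_le_mul_left h5 _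
            _ ≤ (ENNReal.ofReal (t ^ (-3 / p)) * ENNReal.ofReal ε * V ^ (1 - 1 / p)) *
                ENNReal.ofReal R := by gcongr
            _ = _ := by ring
      _ = A * (ENNReal.ofReal ε * V ^ (1 - 1 / p) * ENNReal.ofReal R) := by
          rw [lintegral_mul_const'' _ (by fun_prop)]
      _ ≤ _ := le_of_eq (by ring)
  have hfin : ‖c - g 0‖ₑ ≤ M * ENNReal.ofReal ε := by
    have h6 : ‖c - g 0‖ₑ * V ≤ (V ^ (1 - 1 / p) * (1 + A * ENNReal.ofReal R)) *
        ENNReal.ofReal ε := by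
      refine hI.trans ((add_le_add hT1 hT2).trans (le_of_eq (by ring)))
    calc ‖c - g 0‖ₑ = V⁻¹ * (‖c - g 0‖ₑ * V) := by
          rw [mul_comm, mul_assoc, ENNReal.mul_inv_cancel hV0 hVt, mul_one]
      _ ≤ V⁻¹ * _ := mul_le_mul_right h6 _
      _ = _ := by rw [hM]; ring
  have h7 := ENNReal.toReal_mono (ENNReal.mul_ne_top hMt (by simp)) hfin
  rw [ENNReal.toReal_mul, ENNReal.toReal_ofReal hε.le, toReal_enorm, Real.norm_eq_abs] at h7
  nlinarith

def Cone3 (a : ℝ) : Set E3 := {q | 0 < q 2 ∧ q 2 < 1 ∧ (q 0 - a * q 2)^2 + (q 1)^2 < (q 2)^2}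

lemma cone_open (a : ℝ) : IsOpen (Cone3 a) := by
  have h : Cone3 a = {q : E3 | 0 < q 2} ∩ ({q : E3 | q 2 < 1} ∩
      {q : E3 | (q 0 - a * q 2)^2 + (q 1)^2 < (q 2)^2}) := rfl
  rw [h]
  refine IsOpen.inter ?_ (IsOpen.inter ?_ ?_)
  · exact isOpen_lt (by fun_prop) (by fun_prop)
  · exact isOpen_lt (by fun_prop) (by fun_prop)
  · exact isOpen_lt (by fun_prop) (by fun_prop)

lemma cone_star (a : ℝ) : ∀ q ∈ Cone3 a, ∀ t ∈ Ioc (0:ℝ) 1, t • q ∈ Cone3 a := by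
  rintro q ⟨h1, h2, h3⟩ t ⟨ht0, ht1⟩
  refine ⟨?_, ?_, ?_⟩
  · simp only [PiLp.smul_apply, smul_eq_mul]; positivity
  · simp only [PiLp.smul_apply, smul_eq_mul]; nlinarith
  · simp only [PiLp.smul_apply, smul_eq_mul]
    have := mul_lt_mul_of_pos_left h3 (pow_pos ht0 2)
    nlinarith

lemma cone_nonempty (a : ℝ) : (Cone3 a).Nonempty := by
  refine ⟨!₂[a / 2, 0, 1 / 2], ?_⟩
  simp only [Cone3, mem_ofPred_eq]
  simp
  ring_nf
  norm_num

lemma cone_bdd (a : ℝ) (ha : a^2 = 4) : ∀ q ∈ Cone3 a, ‖q‖ ≤ 4 := by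
  rintro q ⟨h1, h2, h3⟩
  rw [EuclideanSpace.norm_eq, Real.sqrt_le_left (by norm_num)]
  simp only [Fin.sum_univ_three, Real.norm_eq_abs, sq_abs]
  have hz : (q 2)^2 < 1 := by nlinarith
  have haz : (a * q 2)^2 = 4 * (q 2)^2 := by rw [mul_pow, ha]
  nlinarith [sq_nonneg (q 0 - 2 * (a * q 2)), sq_nonneg (q 1)]

lemma zero_mem_closure (k : ℕ) (a : ℝ) (h : Cone3 a ⊆ Omg k) :
    (0 : E3) ∈ closure (Omg k) := by
  obtain ⟨q, hq⟩ := cone_nonempty a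
  have hc : Filter.Tendsto (fun t : ℝ => t • q) (nhdsWithin 0 (Ioi 0)) (nhds 0) := by
    have : Continuous (fun t : ℝ => t • q) := by fun_prop
    have h2 := this.tendsto 0
    rw [zero_smul] at h2
    exact h2.mono_left nhdsWithin_le_nhds
  refine mem_closure_of_tendsto hc ?_
  filter_upwards [Ioc_mem_nhdsGT (zero_lt_one' ℝ)] with t ht
  exact h (cone_star a q hq t ht)

lemma cone_transfer (k : ℕ) (a c p ε : ℝ) (u g : E3 → ℝ) (h : Cone3 a ⊆ Omg k)
    (hu : ∀ q ∈ Cone3 a, u q = c) (hcl : W1pClose u g (Omg k) p ε) :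
    eLpNorm ((Cone3 a).indicator (fun q => c - g q)) (ENNReal.ofReal p) volume
      ≤ ENNReal.ofReal ε ∧
    eLpNorm ((Cone3 a).indicator (fun q => ‖fderiv ℝ g q‖)) (ENNReal.ofReal p) volume
      ≤ ENNReal.ofReal ε := by
  constructor
  · refine le_trans (eLpNorm_mono_enorm ?_) hcl.1.le
    intro q
    by_cases hq : q ∈ Cone3 a
    · simp [hq, h hq, hu q hq]
    · simp [hq]
  · refine le_trans (eLpNorm_mono_enorm ?_) hcl.2.le
    intro q
    by_cases hq : q ∈ Cone3 a
    · have hev : u =ᶠ[nhds q] fun _ => c := by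
        filter_upwards [(cone_open a).mem_nhds hq] with x hx using hu x hx
      have hd : fderiv ℝ u q = 0 := by rw [hev.fderiv_eq]; simp
      simp [hq, h hq, hd]
    · simp [hq]

theorem stmt2 (ψ : ℝ → ℝ) (hψ : ContDiff ℝ (⊤ : ℕ∞) ψ) (hmono : Antitone ψ)
    (hrange : ∀ t, ψ t ∈ Icc (0:ℝ) 1)
    (hone : ∀ t < (1:ℝ)/2, ψ t = 1) (hzero : ∀ t ≥ (3:ℝ)/4, ψ t = 0)
    (k : ℕ) (hk : 2 ≤ k) (p : ℝ) (hp3 : 3 < p) (hpk : p < k + 2) :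
    ¬ (∀ ε > (0:ℝ), ∃ (U : Set (EuclideanSpace ℝ (Fin 3)))
        (g : EuclideanSpace ℝ (Fin 3) → ℝ),
        IsOpen U ∧ closure (Omg k) ⊆ U ∧ ContDiffOn ℝ (⊤ : ℕ∞) g U ∧
        W1pClose (fun q => ψ (q 0 / q 2)) g (Omg k) p ε) := by
  intro H
  have hs1 : Cone3 2 ⊆ Omg k := fun q hq => ⟨hq.1, hq.2.1, Or.inr (Or.inr hq.2.2)⟩
  have hs2 : Cone3 (-2) ⊆ Omg k := fun q hq => ⟨hq.1, hq.2.1, Or.inl (by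
    have := hq.2.2
    rw [neg_mul, sub_neg_eq_add] at this
    exact this)⟩
  obtain ⟨K1, hK1, h1⟩ := morrey (Cone3 2) (cone_open 2) (cone_nonempty 2) 4
    (cone_bdd 2 (by norm_num)) (cone_star 2) p hp3
  obtain ⟨K2, hK2, h2⟩ := morrey (Cone3 (-2)) (cone_open (-2)) (cone_nonempty (-2)) 4
    (cone_bdd (-2) (by norm_num)) (cone_star (-2)) p hp3
  have hε : 0 < 1 / (2 * (K1 + K2)) := by positivity
  obtain ⟨U, g, hU, hcU, hg, hcl⟩ := H _ hε
  have h0 : (0 : E3) ∈ U := hcU (zero_mem_closure k 2 hs1)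
  have hu1 : ∀ q ∈ Cone3 2, (fun q : E3 => ψ (q 0 / q 2)) q = 0 := by
    rintro q ⟨a1, a2, a3⟩
    apply hzero
    rw [ge_iff_le, le_div_iff₀ a1]
    have hh := abs_lt_of_sq_lt_sq' (show (q 0 - 2 * q 2)^2 < (q 2)^2 by nlinarith [sq_nonneg (q 1)]) a1.le
    linarith [hh.1, hh.2]
  have hu2 : ∀ q ∈ Cone3 (-2), (fun q : E3 => ψ (q 0 / q 2)) q = 1 := by
    rintro q ⟨a1, a2, a3⟩
    apply hone
    rw [div_lt_iff₀ a1]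
    have hh := abs_lt_of_sq_lt_sq' (show (q 0 - (-2) * q 2)^2 < (q 2)^2 by nlinarith [sq_nonneg (q 1)]) a1.le
    linarith [hh.1, hh.2]
  obtain ⟨b1, b2⟩ := cone_transfer k 2 0 p _ _ g hs1 hu1 hcl
  obtain ⟨d1, d2⟩ := cone_transfer k (-2) 1 p _ _ g hs2 hu2 hcl
  have e1 := h1 U g 0 _ hε hU (hs1.trans (subset_closure.trans hcU)) h0 hg b1 b2
  have e2 := h2 U g 1 _ hε hU (hs2.trans (subset_closure.trans hcU)) h0 hg d1 d2
  have e3 : K1 * (1 / (2 * (K1 + K2))) + K2 * (1 / (2 * (K1 + K2))) = 1 / 2 := by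
    field_simp
  have e4 := abs_le.1 e1
  have e5 := abs_le.1 e2
  linarith [e4.1, e5.2]
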